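/- Define r(s) := s·∫₀¹ u·log((1+√(1−u²))/u) · (1 − s(1 − πu/2))^{−1} du for s ∈ (0,1). Then r(1⁻) = 1 and, as s → 1⁻, 1 − r(s) = (2/π²)·(1−s)·log²(1−s) − (4/π²)·log(π)·(1−s)·log(1−s) + o((1−s)·log(1−s)). -/

import Mathlib

open Real MeasureTheory Filter Asymptotics

/-!
If `f u = c - log u + g u` with `g u / u` integrable at `0`, then replacing `log u` by `log (ε + u)`
in `∫₀ᵇ f u / (ε + u) du` costs only `O(1)`, and the integrand becomes the derivative of
`c log (ε + u) - log² (ε + u) / 2`; hence the integral is `log² ε / 2 - c log ε + O(1)`.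

Since `κ s u = (1 - s (1 - κ u)) - (1 - s)`, the integral defining `r` differs from `κ⁻¹ ∫ f` by a
multiple of the integral above at `ε = (1 - s) / (κ s)`. When `∫ f = κ` this gives
`1 - r s = κ⁻² (1 - s) (log² (1 - s) / 2 - (c + log κ) log (1 - s)) + O(1 - s)`.
The theorem is the case `f = arsech`, where `c = log 2` and `κ = π / 2`, so that
`c + log κ = log π`.
-/

open scoped Topology

section StieltjesTransform

variable {f g : ℝ → ℝ} {b c ε : ℝ}

lemma log_one_add_le_two_mul_sqrt {x : ℝ} (hx : 0 ≤ x) : log (1 + x) ≤ 2 * √x := by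
  have hs : 0 ≤ √x := sqrt_nonneg x
  calc log (1 + x) ≤ log ((1 + √x) ^ 2) :=
        log_le_log (by linarith) (by nlinarith [sq_sqrt hx])
    _ = 2 * log (1 + √x) := by rw [log_pow, Nat.cast_ofNat]
    _ ≤ 2 * √x := by linarith [log_le_sub_one_of_pos (show 0 < 1 + √x by linarith)]

lemma hasDerivAt_two_mul_arctan_sqrt_div {u : ℝ} (hε : 0 < ε) (hu : 0 < u) :
    HasDerivAt (fun x ↦ 2 * arctan √(x / ε)) (√(ε / u) / (ε + u)) u := by
  have hq : 0 < u / ε := div_pos hu hε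
  have : 0 < √(u / ε) := sqrt_pos.2 hq
  have hinv : √(ε / u) = (√(u / ε))⁻¹ := by rw [← sqrt_inv, inv_div]
  refine (((((hasDerivAt_id' u).div_const ε).sqrt hq.ne').arctan).const_mul 2).congr_deriv ?_
  rw [hinv, sq_sqrt hq.le]
  field_simp

lemma intervalIntegrable_sqrt_div_div_add (hε : 0 < ε) (hb : 0 ≤ b) :
    IntervalIntegrable (fun u ↦ √(ε / u) / (ε + u)) volume 0 b := by
  rw [intervalIntegrable_iff_integrableOn_Ioc_of_le hb]
  refine intervalIntegral.integrableOn_deriv_of_nonneg (g := fun x ↦ 2 * arctan √(x / ε))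
    (by fun_prop) (fun u hu ↦ hasDerivAt_two_mul_arctan_sqrt_div hε hu.1) fun u hu ↦ ?_
  have := hu.1
  positivity

lemma integral_sqrt_div_div_add (hε : 0 < ε) (hb : 0 ≤ b) :
    ∫ u in (0 : ℝ)..b, √(ε / u) / (ε + u) = 2 * arctan √(b / ε) := by
  rw [intervalIntegral.integral_eq_sub_of_hasDerivAt_of_le hb
    (f := fun x ↦ 2 * arctan √(x / ε)) (by fun_prop)
    (fun u hu ↦ hasDerivAt_two_mul_arctan_sqrt_div hε hu.1)
    (intervalIntegrable_sqrt_div_div_add hε hb)]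
  simp

lemma abs_integral_log_one_add_div_div_add_le (hε : 0 < ε) (hb : 0 ≤ b) :
    |∫ u in (0 : ℝ)..b, log (1 + ε / u) / (ε + u)| ≤ 2 * π := by
  have hbound : ∀ u ∈ Set.Ioc 0 b,
      ‖log (1 + ε / u) / (ε + u)‖ ≤ 2 * (√(ε / u) / (ε + u)) := fun u hu ↦ by
    have hu0 : 0 < u := hu.1
    have hq : 0 < ε / u := div_pos hε hu0
    have hlog : 0 ≤ log (1 + ε / u) := log_nonneg (by linarith)
    rw [norm_of_nonneg (by positivity), ← mul_div_assoc]
    gcongr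
    exact log_one_add_le_two_mul_sqrt hq.le
  calc |∫ u in (0 : ℝ)..b, log (1 + ε / u) / (ε + u)|
      ≤ ∫ u in (0 : ℝ)..b, 2 * (√(ε / u) / (ε + u)) :=
        intervalIntegral.norm_integral_le_of_norm_le hb (.of_forall hbound)
          ((intervalIntegrable_sqrt_div_div_add hε hb).const_mul 2)
    _ = 4 * arctan √(b / ε) := by
        rw [intervalIntegral.integral_const_mul, integral_sqrt_div_div_add hε hb]
        ring
    _ ≤ 2 * π := by linarith [arctan_lt_pi_div_two √(b / ε)]

lemma add_ne_zero_of_mem_uIcc (hε : 0 < ε) (hb : 0 ≤ b) {u : ℝ} (hu : u ∈ Set.uIcc 0 b) :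
    ε + u ≠ 0 := by
  rw [Set.uIcc_of_le hb] at hu
  linarith [hu.1]

lemma intervalIntegrable_div_const_add (hf : IntervalIntegrable f volume 0 b) (hε : 0 < ε)
    (hb : 0 ≤ b) : IntervalIntegrable (fun u ↦ f u / (ε + u)) volume 0 b :=
  hf.mul_continuousOn
    (ContinuousOn.inv₀ (by fun_prop) fun _ hu ↦ add_ne_zero_of_mem_uIcc hε hb hu)

lemma intervalIntegrable_sub_log_div (hε : 0 < ε) (hb : 0 ≤ b) :
    IntervalIntegrable (fun u ↦ (c - log (ε + u)) / (ε + u)) volume 0 b :=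
  have hne : ∀ u ∈ Set.uIcc 0 b, ε + u ≠ 0 := fun _ hu ↦ add_ne_zero_of_mem_uIcc hε hb hu
  ((continuousOn_const.sub (ContinuousOn.log (by fun_prop) hne)).div
    (by fun_prop) hne).intervalIntegrable

lemma integral_sub_log_div (hε : 0 < ε) (hb : 0 ≤ b) :
    ∫ u in (0 : ℝ)..b, (c - log (ε + u)) / (ε + u) =
      (log ε ^ 2 / 2 - c * log ε) - (log (ε + b) ^ 2 / 2 - c * log (ε + b)) := by
  have hderiv : ∀ u ∈ Set.uIcc 0 b,
      HasDerivAt (fun x ↦ c * log (ε + x) - log (ε + x) ^ 2 / 2)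
        ((c - log (ε + u)) / (ε + u)) u := fun u hu ↦ by
    have hne := add_ne_zero_of_mem_uIcc hε hb hu
    have hlog := ((hasDerivAt_id' u).const_add ε).log hne
    refine ((hlog.const_mul c).sub ((hlog.pow 2).div_const 2)).congr_deriv ?_
    field_simp
    ring
  rw [intervalIntegral.integral_eq_sub_of_hasDerivAt hderiv (intervalIntegrable_sub_log_div hε hb),
    add_zero]
  ring

lemma abs_integral_div_const_add_le (hg : IntervalIntegrable (fun u ↦ g u / u) volume 0 b)
    (hε : 0 ≤ ε) (hb : 0 ≤ b) :
    |∫ u in (0 : ℝ)..b, g u / (ε + u)| ≤ ∫ u in (0 : ℝ)..b, |g u / u| := by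
  have hbound : ∀ u ∈ Set.Ioc 0 b, ‖g u / (ε + u)‖ ≤ |g u / u| := fun u hu ↦ by
    have hu0 : 0 < u := hu.1
    rw [norm_eq_abs, abs_div, abs_div, abs_of_pos hu0, abs_of_pos (by positivity : 0 < ε + u)]
    gcongr
    linarith
  exact intervalIntegral.norm_integral_le_of_norm_le hb (.of_forall hbound) hg.abs

lemma intervalIntegrable_of_add_log_sub_div
    (hf : IntervalIntegrable (fun u ↦ (f u + log u - c) / u) volume 0 b) (hb : 0 ≤ b) :
    IntervalIntegrable f volume 0 b := by
  have hadd := ((hf.continuousOn_mul continuousOn_id).add (intervalIntegrable_const (c := c))).sub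
    intervalIntegral.intervalIntegrable_log'
  refine hadd.congr fun u hu ↦ ?_
  rw [Set.uIoc_of_le hb] at hu
  have := hu.1.ne'
  simp only [id]
  field_simp
  ring

lemma integral_div_const_add_sub_eq
    (hf : IntervalIntegrable (fun u ↦ (f u + log u - c) / u) volume 0 b) (hε : 0 < ε)
    (hb : 0 ≤ b) :
    (∫ u in (0 : ℝ)..b, f u / (ε + u)) - (log ε ^ 2 / 2 - c * log ε) =
      (∫ u in (0 : ℝ)..b, log (1 + ε / u) / (ε + u)) +
        (∫ u in (0 : ℝ)..b, (f u + log u - c) / (ε + u)) -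
          (log (ε + b) ^ 2 / 2 - c * log (ε + b)) := by
  have hfi := intervalIntegrable_of_add_log_sub_div hf hb
  have hgi := intervalIntegrable_div_const_add
    ((hfi.add intervalIntegral.intervalIntegrable_log').sub (intervalIntegrable_const (c := c)))
    hε hb
  have hmain := intervalIntegrable_sub_log_div (c := c) hε hb
  have hfdiv := intervalIntegrable_div_const_add hfi hε hb
  have hsplit : ∫ u in (0 : ℝ)..b, log (1 + ε / u) / (ε + u) =
      ∫ u in (0 : ℝ)..b, (f u / (ε + u) - (f u + log u - c) / (ε + u) -
        (c - log (ε + u)) / (ε + u)) := by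
    refine intervalIntegral.integral_congr_ae (.of_forall fun u hu ↦ ?_)
    rw [Set.uIoc_of_le hb] at hu
    have hu0 : 0 < u := hu.1
    rw [show 1 + ε / u = (ε + u) / u by field_simp; ring,
      log_div (by positivity) hu0.ne']
    ring
  rw [hsplit, intervalIntegral.integral_sub (hfdiv.sub hgi) hmain,
    intervalIntegral.integral_sub hfdiv hgi, integral_sub_log_div hε hb]
  ring

theorem isBigO_one_integral_div_const_add_sub
    (hf : IntervalIntegrable (fun u ↦ (f u + log u - c) / u) volume 0 b) (hb : 0 < b) :
    (fun ε ↦ (∫ u in (0 : ℝ)..b, f u / (ε + u)) - (log ε ^ 2 / 2 - c * log ε))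
      =O[𝓝[>] 0] fun _ ↦ (1 : ℝ) := by
  have hlog : (fun ε ↦ ∫ u in (0 : ℝ)..b, log (1 + ε / u) / (ε + u)) =O[𝓝[>] 0]
      fun _ ↦ (1 : ℝ) :=
    .of_bound (2 * π) <| eventually_mem_nhdsWithin.mono fun ε hε ↦ by
      simpa using abs_integral_log_one_add_div_div_add_le hε hb.le
  have hrem : (fun ε ↦ ∫ u in (0 : ℝ)..b, (f u + log u - c) / (ε + u)) =O[𝓝[>] 0]
      fun _ ↦ (1 : ℝ) :=
    .of_bound (∫ u in (0 : ℝ)..b, |(f u + log u - c) / u|) <|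
      eventually_mem_nhdsWithin.mono fun ε hε ↦ by
        simpa using abs_integral_div_const_add_le hf (le_of_lt hε) hb.le
  have hend : (fun ε ↦ log (ε + b) ^ 2 / 2 - c * log (ε + b)) =O[𝓝[>] 0] fun _ ↦ (1 : ℝ) := by
    have : ContinuousAt (fun ε ↦ log (ε + b) ^ 2 / 2 - c * log (ε + b)) 0 := by
      fun_prop (disch := simp [hb.ne'])
    exact (this.tendsto.mono_left nhdsWithin_le_nhds).isBigO_one ℝ
  refine ((hlog.add hrem).sub hend).congr' ?_ .rfl
  filter_upwards [self_mem_nhdsWithin] with ε hε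
  exact (integral_div_const_add_sub_eq hf hε hb.le).symm

end StieltjesTransform

section NearOne

variable {c κ : ℝ}

lemma tendsto_const_sub_nhdsLT (a : ℝ) : Tendsto (fun x ↦ a - x) (𝓝[<] a) (𝓝[>] 0) := by
  refine tendsto_nhdsWithin_iff.2
    ⟨?_, eventually_mem_nhdsWithin.mono fun x (hx : x < a) ↦ Set.mem_Ioi.2 (sub_pos.2 hx)⟩
  have hcont : Continuous fun x ↦ a - x := by fun_prop
  simpa using (hcont.tendsto a).mono_left nhdsWithin_le_nhds

lemma tendsto_mul_log_nhds_zero : Tendsto (fun x : ℝ ↦ x * log x) (𝓝 0) (𝓝 0) := by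
  simpa using continuous_mul_log.tendsto 0

lemma tendsto_mul_log_sq_nhdsGT_zero :
    Tendsto (fun x : ℝ ↦ x * log x ^ 2) (𝓝[>] 0) (𝓝 0) := by
  have hcont : Continuous fun x ↦ 4 * (√x * log √x) ^ 2 :=
    continuous_const.mul ((continuous_mul_log.comp continuous_sqrt).pow 2)
  have hlim : Tendsto (fun x ↦ 4 * (√x * log √x) ^ 2) (𝓝[>] 0) (𝓝 0) := by
    simpa using (hcont.tendsto 0).mono_left nhdsWithin_le_nhds
  refine hlim.congr' (eventually_mem_nhdsWithin.mono fun x (hx : 0 < x) ↦ ?_)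
  rw [log_sqrt hx.le, mul_pow, sq_sqrt hx.le]
  ring

lemma tendsto_log_mul_log_one_sub_nhdsLT_one :
    Tendsto (fun s : ℝ ↦ log s * log (1 - s)) (𝓝[<] 1) (𝓝 0) := by
  have hlog : log =O[𝓝[<] 1] fun s ↦ 1 - s := by
    simpa using ((hasDerivAt_log one_ne_zero).isBigO_sub.mono nhdsWithin_le_nhds).trans
      (isBigO_refl (fun s : ℝ ↦ s - 1) _).neg_right
  exact (hlog.mul (isBigO_refl (fun s ↦ log (1 - s)) _)).trans_tendsto
    (tendsto_mul_log_nhds_zero.comp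
      ((tendsto_const_sub_nhdsLT 1).mono_right nhdsWithin_le_nhds))

lemma isLittleO_one_sub_mul_log :
    (fun s : ℝ ↦ 1 - s) =o[𝓝[<] 1] fun s ↦ (1 - s) * log (1 - s) := by
  have hlog : (fun _ ↦ (1 : ℝ)) =o[𝓝[<] 1] fun s : ℝ ↦ log (1 - s) :=
    isLittleO_one_left_iff ℝ |>.2 <| tendsto_abs_atBot_atTop.comp <|
      tendsto_log_nhdsGT_zero.comp (tendsto_const_sub_nhdsLT 1)
  simpa using (isBigO_refl (fun s : ℝ ↦ 1 - s) _).mul_isLittleO hlog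

lemma tendsto_one_sub_mul_log_sq_sub (a : ℝ) :
    Tendsto (fun s ↦ (1 - s) * (log (1 - s) ^ 2 / 2 - a * log (1 - s))) (𝓝[<] 1) (𝓝 0) := by
  have hsub := tendsto_const_sub_nhdsLT 1
  have hsq := (tendsto_mul_log_sq_nhdsGT_zero.comp hsub).div_const 2
  have hlog := (tendsto_mul_log_nhds_zero.comp (hsub.mono_right nhdsWithin_le_nhds)).const_mul a
  have hlim := hsq.sub hlog
  simp only [zero_div, mul_zero, sub_zero] at hlim
  refine hlim.congr fun s ↦ ?_
  simp only [Function.comp_apply]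
  ring

lemma tendsto_one_sub_div_mul_nhdsLT_one (hκ : 0 < κ) :
    Tendsto (fun s ↦ (1 - s) / (κ * s)) (𝓝[<] 1) (𝓝[>] 0) := by
  refine tendsto_nhdsWithin_iff.2 ⟨?_, ?_⟩
  · have : ContinuousAt (fun s ↦ (1 - s) / (κ * s)) 1 := by
      fun_prop (disch := simpa using hκ.ne')
    simpa using this.tendsto.mono_left nhdsWithin_le_nhds
  · filter_upwards [Ioo_mem_nhdsLT (zero_lt_one' ℝ)] with s hs
    exact div_pos (sub_pos.2 hs.2) (mul_pos hκ hs.1)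

lemma isBigO_log_sq_one_sub_div_mul_sub (c : ℝ) (hκ : 0 < κ) :
    (fun s ↦ (log ((1 - s) / (κ * s)) ^ 2 / 2 - c * log ((1 - s) / (κ * s))) -
        (log (1 - s) ^ 2 / 2 - (c + log κ) * log (1 - s)))
      =O[𝓝[<] 1] fun _ ↦ (1 : ℝ) := by
  have hshift : Tendsto (fun s ↦ (log κ + log s) ^ 2 / 2 + c * (log κ + log s)) (𝓝[<] 1)
      (𝓝 ((log κ + log 1) ^ 2 / 2 + c * (log κ + log 1))) :=
    (show ContinuousAt (fun s ↦ (log κ + log s) ^ 2 / 2 + c * (log κ + log s)) 1 by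
      fun_prop (disch := simp)).tendsto.mono_left nhdsWithin_le_nhds
  refine ((hshift.sub tendsto_log_mul_log_one_sub_nhdsLT_one).isBigO_one ℝ).congr' ?_ .rfl
  filter_upwards [Ioo_mem_nhdsLT (zero_lt_one' ℝ)] with s hs
  rw [log_div (sub_pos.2 hs.2).ne' (mul_pos hκ hs.1).ne', log_mul hκ.ne' hs.1.ne']
  ring

end NearOne

section MomentGenFun

/-- The generating function `∑ n, s ^ (n + 1) * ∫₀ᵇ u f(u) (1 - κ u) ^ n du` of the moments of
`u f(u) du` in the variable `1 - κ u`, with the geometric series summed. The function `r` of the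
theorem is the case `f = arsech`, `κ = π / 2`, `b = 1`. -/
noncomputable def momentGenFun (f : ℝ → ℝ) (κ b s : ℝ) : ℝ :=
  s * ∫ u in (0 : ℝ)..b, u * f u * (1 - s * (1 - κ * u))⁻¹

variable {f : ℝ → ℝ} {b c κ : ℝ}

lemma momentGenFun_eq_sub {s : ℝ} (hf : IntervalIntegrable f volume 0 b) (hb : 0 ≤ b)
    (hκ : 0 < κ) (hs0 : 0 < s) (hs1 : s < 1) :
    momentGenFun f κ b s = κ⁻¹ * (∫ u in (0 : ℝ)..b, f u) -
      (1 - s) / (κ ^ 2 * s) * ∫ u in (0 : ℝ)..b, f u / ((1 - s) / (κ * s) + u) := by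
  have hε : 0 < (1 - s) / (κ * s) := div_pos (sub_pos.2 hs1) (mul_pos hκ hs0)
  rw [momentGenFun, ← intervalIntegral.integral_const_mul, ← intervalIntegral.integral_const_mul,
    ← intervalIntegral.integral_const_mul, ← intervalIntegral.integral_sub (hf.const_mul _)
      ((intervalIntegrable_div_const_add hf hε hb).const_mul _)]
  refine intervalIntegral.integral_congr fun u hu ↦ ?_
  have hne := add_ne_zero_of_mem_uIcc hε hb hu
  have hfactor : 1 - s * (1 - κ * u) = κ * s * ((1 - s) / (κ * s) + u) := by
    field_simp
    ring
  have hu_eq : u = ((1 - s) / (κ * s) + u) - (1 - s) / (κ * s) := by ring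
  simp only [hfactor]
  generalize (1 - s) / (κ * s) + u = D at hne hu_eq
  rw [hu_eq]
  field_simp

theorem isBigO_one_sub_momentGenFun_sub
    (hf : IntervalIntegrable (fun u ↦ (f u + log u - c) / u) volume 0 b) (hb : 0 < b)
    (hκ : 0 < κ) (hint : ∫ u in (0 : ℝ)..b, f u = κ) :
    (fun s ↦ 1 - momentGenFun f κ b s -
        (1 - s) / κ ^ 2 * (log (1 - s) ^ 2 / 2 - (c + log κ) * log (1 - s)))
      =O[𝓝[<] 1] fun s ↦ 1 - s := by
  have hstieltjes := (isBigO_one_integral_div_const_add_sub hf hb).comp_tendsto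
    (tendsto_one_sub_div_mul_nhdsLT_one hκ)
  have hbracket := (hstieltjes.add (isBigO_log_sq_one_sub_div_mul_sub c hκ)).add
    ((tendsto_one_sub_mul_log_sq_sub (c + log κ)).isBigO_one ℝ)
  have hfactor : (fun s ↦ (1 - s) / (κ ^ 2 * s)) =O[𝓝[<] 1] fun s ↦ 1 - s := by
    have hcont : ContinuousAt (fun s ↦ (κ ^ 2 * s)⁻¹) 1 := by
      fun_prop (disch := simpa using hκ.ne')
    simpa [div_eq_mul_inv] using (isBigO_refl (fun s : ℝ ↦ 1 - s) (𝓝[<] 1)).mul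
      ((hcont.tendsto.mono_left nhdsWithin_le_nhds).isBigO_one ℝ)
  refine (hfactor.mul hbracket).congr' ?_ (.of_forall fun s ↦ mul_one _)
  filter_upwards [Ioo_mem_nhdsLT (zero_lt_one' ℝ)] with s hs
  rw [momentGenFun_eq_sub (intervalIntegrable_of_add_log_sub_div hf hb.le) hb.le hκ hs.1 hs.2, hint]
  have := hs.1.ne'
  simp only [Function.comp_apply]
  field_simp
  ring

theorem tendsto_momentGenFun_nhdsLT_one
    (hf : IntervalIntegrable (fun u ↦ (f u + log u - c) / u) volume 0 b) (hb : 0 < b)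
    (hκ : 0 < κ) (hint : ∫ u in (0 : ℝ)..b, f u = κ) :
    Tendsto (momentGenFun f κ b) (𝓝[<] 1) (𝓝 1) := by
  have hrem := (isBigO_one_sub_momentGenFun_sub hf hb hκ hint).trans_tendsto
    ((tendsto_const_sub_nhdsLT 1).mono_right nhdsWithin_le_nhds)
  have hmain := (tendsto_one_sub_mul_log_sq_sub (c + log κ)).div_const (κ ^ 2)
  have hlim := (hrem.add hmain).const_sub 1
  simp only [zero_div, add_zero, sub_zero] at hlim
  exact hlim.congr fun s ↦ by ring

end MomentGenFun

section Arsech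

/-- The inverse hyperbolic secant, given by this formula on `(0, 1]`. -/
noncomputable def arsech (u : ℝ) : ℝ := log ((1 + √(1 - u ^ 2)) / u)

variable {u : ℝ}

lemma arsech_eq_log_sub_log (hu : u ≠ 0) : arsech u = log (1 + √(1 - u ^ 2)) - log u :=
  log_div (by positivity) hu

lemma abs_log_one_add_sqrt_one_sub_sq_sub_log_two_le (h0 : 0 ≤ u) (h1 : u ≤ 1) :
    |log (1 + √(1 - u ^ 2)) - log 2| ≤ u := by
  have hsq : 0 ≤ 1 - u ^ 2 := by nlinarith
  have hw_le : √(1 - u ^ 2) ≤ 1 := sqrt_le_one.2 (by nlinarith)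
  have hw_ge : 1 - u ^ 2 ≤ √(1 - u ^ 2) :=
    le_sqrt_of_sq_le (by nlinarith [mul_nonneg (sq_nonneg u) hsq])
  set w := √(1 - u ^ 2)
  have : 0 ≤ w := sqrt_nonneg _
  have hlog : log (1 + w) ≤ log 2 := log_le_log (by linarith) (by linarith)
  calc |log (1 + w) - log 2| = log (2 / (1 + w)) := by
        rw [abs_of_nonpos (by linarith), neg_sub, log_div two_ne_zero (by positivity)]
    _ ≤ 2 / (1 + w) - 1 := log_le_sub_one_of_pos (by positivity)
    _ ≤ u := by
        rw [sub_le_iff_le_add, div_le_iff₀ (by positivity)]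
        nlinarith

lemma intervalIntegrable_arsech_add_log_sub_log_two_div :
    IntervalIntegrable (fun u ↦ (arsech u + log u - log 2) / u) volume 0 1 := by
  refine (intervalIntegrable_const (c := (1 : ℝ))).mono_fun' ?_ ?_
  · unfold arsech
    exact Measurable.aestronglyMeasurable (by fun_prop)
  · refine (ae_restrict_iff' measurableSet_uIoc).2 (.of_forall fun u hu ↦ ?_)
    rw [Set.uIoc_of_le zero_le_one] at hu
    have hu0 : 0 < u := hu.1
    beta_reduce
    rw [norm_div, norm_of_nonneg hu0.le, div_le_one hu0, arsech_eq_log_sub_log hu0.ne',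
      sub_add_cancel]
    exact abs_log_one_add_sqrt_one_sub_sq_sub_log_two_le hu0.le hu.2

lemma hasDerivAt_mul_arsech_add_arcsin (h0 : 0 < u) (h1 : u < 1) :
    HasDerivAt (fun x ↦ x * log (1 + √(1 - x ^ 2)) - x * log x + arcsin x) (arsech u) u := by
  have hpos : 0 < 1 - u ^ 2 := by nlinarith
  have hw : 0 < √(1 - u ^ 2) := sqrt_pos.2 hpos
  have hsqrt : HasDerivAt (fun x : ℝ ↦ 1 + √(1 - x ^ 2)) (-(2 * u) / (2 * √(1 - u ^ 2))) u := by
    simpa using (((hasDerivAt_pow 2 u).const_sub 1).sqrt hpos.ne').const_add 1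
  refine ((((hasDerivAt_id' u).mul (hsqrt.log (by positivity))).sub
    (hasDerivAt_mul_log h0.ne')).add (hasDerivAt_arcsin (by linarith) h1.ne)).congr_deriv ?_
  rw [arsech_eq_log_sub_log h0.ne']
  have hsq : √(1 - u ^ 2) ^ 2 = 1 - u ^ 2 := sq_sqrt hpos.le
  set w := √(1 - u ^ 2)
  field_simp
  linear_combination -hsq

lemma integral_arsech : ∫ u in (0 : ℝ)..1, arsech u = π / 2 := by
  have hcont : Continuous fun x : ℝ ↦ x * log (1 + √(1 - x ^ 2)) - x * log x + arcsin x :=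
    ((continuous_id.mul (Continuous.log (by fun_prop) fun x ↦ by positivity)).sub
      continuous_mul_log).add continuous_arcsin
  rw [intervalIntegral.integral_eq_sub_of_hasDerivAt_of_le zero_le_one hcont.continuousOn
    (fun u hu ↦ hasDerivAt_mul_arsech_add_arcsin hu.1 hu.2)
    (intervalIntegrable_of_add_log_sub_div intervalIntegrable_arsech_add_log_sub_log_two_div
      zero_le_one)]
  simp

end Arsech

/-- With r(s) := s ∫₀¹ u log((1+√(1−u²))/u) (1 − s(1−πu/2))⁻¹ du, one has
r(s) → 1 as s → 1⁻ and
1 − r(s) = (2/π²)(1−s)log²(1−s) − (4/π²)(log π)(1−s)log(1−s)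
            + o((1−s)log(1−s)) as s → 1⁻. -/
theorem stmt_18 :
    Filter.Tendsto
      (fun s : ℝ => s * ∫ u in (0:ℝ)..1,
        u * Real.log ((1 + Real.sqrt (1 - u^2)) / u) * (1 - s * (1 - Real.pi * u / 2))⁻¹)
      (nhdsWithin 1 (Set.Iio 1)) (nhds 1) ∧
    (fun s : ℝ =>
        (1 - s * ∫ u in (0:ℝ)..1,
          u * Real.log ((1 + Real.sqrt (1 - u^2)) / u) * (1 - s * (1 - Real.pi * u / 2))⁻¹)
        - ((2 / Real.pi^2) * (1 - s) * (Real.log (1 - s))^2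
            - (4 / Real.pi^2) * Real.log Real.pi * (1 - s) * Real.log (1 - s)))
      =o[nhdsWithin 1 (Set.Iio 1)] (fun s => (1 - s) * Real.log (1 - s)) := by
  have hr (s : ℝ) : s * ∫ u in (0 : ℝ)..1,
      u * log ((1 + √(1 - u ^ 2)) / u) * (1 - s * (1 - π * u / 2))⁻¹ =
        momentGenFun arsech (π / 2) 1 s := by
    simp only [momentGenFun, arsech, div_mul_eq_mul_div]
  have hconst : log 2 + log (π / 2) = log π := by
    rw [log_div pi_ne_zero two_ne_zero, add_sub_cancel]
  have hsing := intervalIntegrable_arsech_add_log_sub_log_two_div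
  have hasymp := isBigO_one_sub_momentGenFun_sub hsing one_pos pi_div_two_pos integral_arsech
  simp only [hr]
  refine ⟨tendsto_momentGenFun_nhdsLT_one hsing one_pos pi_div_two_pos integral_arsech, ?_⟩
  refine (hasymp.trans_isLittleO isLittleO_one_sub_mul_log).congr_left fun s ↦ ?_
  rw [hconst]
  field_simp
  ring
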